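/- (Concentration bound via Gromov's and Ledoux's expansion coefficients.) Let (X, d, μ) be a metric measure space, 0 < ε < 1, and let r ≥ ρ > 0. Suppose E = Exp_L(X; 1−ε, ρ) is finite, and let G = Exp_G(X; ε, ρ). Then α^ε(r) ≤ (1 − ε)·G·E²·E^{−r/ρ}. Moreover one has the sharper bound α^ε(r) ≤ (1 − G·ε)·E²·E^{−r/ρ}. -/

import Mathlib

open MeasureTheory Metric Set Real

noncomputable section

/-- Isoperimetric enlargement `A_r = {x | d(x, A) ≤ r}`. -/
def enl {X : Type*} [MetricSpace X] (A : Set X) (r : ℝ) : Set X :=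
  {x | Metric.infDist x A ≤ r}

/-- Concentration function `α^ε(r)`. -/
def concFn {X : Type*} [MetricSpace X] [MeasurableSpace X] (μ : Measure X) (ε r : ℝ) : ℝ :=
  sSup {v : ℝ | ∃ A : Set X, MeasurableSet A ∧ ε ≤ (μ A).toReal ∧ v = 1 - (μ (enl A r)).toReal}

/-- Lipschitz constant of a real-valued function. -/
def lipConst {X : Type*} [MetricSpace X] (f : X → ℝ) : ℝ :=
  sSup {c : ℝ | ∃ x y : X, x ≠ y ∧ c = |f x - f y| / dist x y}

/-- `f` is Lipschitz (some finite Lipschitz constant). -/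
def IsLip {X : Type*} [MetricSpace X] (f : X → ℝ) : Prop :=
  ∃ C : ℝ, ∀ x y : X, |f x - f y| ≤ C * dist x y

/-- `m` is a quantile of order `ε` of `f` for `μ`. -/
def IsQuantile {X : Type*} [MetricSpace X] [MeasurableSpace X] (μ : Measure X)
    (ε : ℝ) (f : X → ℝ) (m : ℝ) : Prop :=
  ε ≤ (μ {x | f x ≤ m}).toReal ∧ 1 - ε ≤ (μ {x | m ≤ f x}).toReal

/-- Admissible constants for Gromov's expansion coefficient. -/
def expGSet {X : Type*} [MetricSpace X] [MeasurableSpace X] (μ : Measure X) (ε ρ : ℝ) : Set ℝ :=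
  {e : ℝ | 1 ≤ e ∧ ∀ A : Set X, MeasurableSet A → ε ≤ (μ A).toReal →
    e * ε ≤ (μ (enl A ρ)).toReal}

/-- Gromov's expansion coefficient. -/
def expG {X : Type*} [MetricSpace X] [MeasurableSpace X] (μ : Measure X) (ε ρ : ℝ) : ℝ :=
  sSup (expGSet μ ε ρ)

/-- Admissible constants for Ledoux's expansion coefficient. -/
def expLSet {X : Type*} [MetricSpace X] [MeasurableSpace X] (μ : Measure X) (ε ρ : ℝ) : Set ℝ :=
  {e : ℝ | 1 ≤ e ∧ ∀ B : Set X, MeasurableSet B → (μ (enl B ρ)).toReal ≤ ε →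
    e * (μ B).toReal ≤ (μ (enl B ρ)).toReal}

/-- Ledoux's expansion coefficient. -/
def expL {X : Type*} [MetricSpace X] [MeasurableSpace X] (μ : Measure X) (ε ρ : ℝ) : ℝ :=
  sSup (expLSet μ ε ρ)

/-- Partial diameter of a Borel measure on ℝ. -/
def partDiam (ν : Measure ℝ) (κ : ℝ) : ℝ :=
  sInf {D : ℝ | 0 ≤ D ∧ ∃ A : Set ℝ, MeasurableSet A ∧ Metric.diam A ≤ D ∧ 1 - κ ≤ (ν A).toReal}

/-- Observable diameter `ObsDiam(X; -κ)`. -/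
def obsDiam {X : Type*} [MetricSpace X] [MeasurableSpace X] (μ : Measure X) (κ : ℝ) : ℝ :=
  sSup {v : ℝ | ∃ f : X → ℝ, LipschitzWith 1 f ∧ v = partDiam (μ.map f) κ}

/-- `μ` is doubling with constant `C`. -/
def IsDoubling {X : Type*} [MetricSpace X] [MeasurableSpace X] (μ : Measure X) (C : ℝ) : Prop :=
  1 ≤ C ∧ ∀ (x : X) (r : ℝ), 0 < r →
    (μ (Metric.closedBall x (2 * r))).toReal ≤ C * (μ (Metric.closedBall x r)).toReal

open Filter Topology

/-!
Points of `(enl A s)ᶜ` are farther than `s` from `A`, so for `t + ρ < s` the `ρ`-enlargement of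
`(enl A s)ᶜ` stays inside `(enl A t)ᶜ`. Ledoux's coefficient `E` therefore gives
`E * μ (enl A s)ᶜ ≤ μ (enl A t)ᶜ`, and right continuity of `s ↦ μ (enl A s)` extends this to
`s = t + ρ`. Iterating `⌊(r - ρ) / ρ⌋` times from radius `r` down to radius `ρ`, where Gromov's
coefficient `G` gives `μ (enl A ρ)ᶜ ≤ 1 - G * ε`, yields the sharper bound. The other one follows
from `1 - G * ε ≤ (1 - ε) * G`, that is, `1 ≤ G`.
-/

section Enlargement

variable {X : Type*} [MetricSpace X] {A : Set X} {ρ s t : ℝ}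

theorem monotone_enl (A : Set X) : Monotone (enl A) :=
  fun _ _ hst _ hx => le_trans hx hst

theorem subset_enl (A : Set X) (hρ : 0 ≤ ρ) : A ⊆ enl A ρ :=
  fun _ hx => (infDist_zero_of_mem hx).trans_le hρ

theorem isClosed_enl (A : Set X) (s : ℝ) : IsClosed (enl A s) :=
  isClosed_le (continuous_infDist_pt A) continuous_const

theorem biInter_gt_enl (A : Set X) (s : ℝ) : ⋂ u > s, enl A u = enl A s := by
  ext x
  simp only [enl, mem_iInter, mem_ofPred_eq]
  exact forall_gt_imp_ge_iff_le_of_dense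

-- Junk value: `infDist x ∅ = 0`, so `enl ∅ ρ = univ` for `0 ≤ ρ`.
theorem enl_compl_enl_subset (hne : (enl A s)ᶜ.Nonempty) (hts : t + ρ < s) :
    enl (enl A s)ᶜ ρ ⊆ (enl A t)ᶜ := by
  intro x (hx : infDist x (enl A s)ᶜ ≤ ρ) (hxA : infDist x A ≤ t)
  obtain ⟨y, hy, hxy⟩ := (infDist_lt_iff hne).1 (hx.trans_lt (lt_sub_iff_add_lt'.2 hts))
  refine hy (show infDist y A ≤ s from ?_)
  calc infDist y A ≤ infDist x A + dist y x := infDist_le_infDist_add_dist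
    _ ≤ t + (s - t) := add_le_add hxA (dist_comm x y ▸ hxy.le)
    _ = s := add_sub_cancel t s

end Enlargement

section ExpansionCoefficients

theorem sSup_mul_le {S : Set ℝ} {a b : ℝ} (ha : 0 ≤ a) (hb : 0 ≤ b) (h : ∀ e ∈ S, e * a ≤ b) :
    sSup S * a ≤ b := by
  rcases ha.eq_or_lt with rfl | ha
  · rwa [mul_zero]
  · rw [← le_div_iff₀ ha]
    exact Real.sSup_le (fun e he => (le_div_iff₀ ha).2 (h e he)) (div_nonneg hb ha.le)

variable {X : Type*} [MetricSpace X] [MeasurableSpace X] {μ : Measure X} {A B : Set X} {ε ρ : ℝ}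

theorem expG_mul_le_measureReal_enl (hε : 0 ≤ ε) (hA : MeasurableSet A) (hεA : ε ≤ μ.real A) :
    expG μ ε ρ * ε ≤ μ.real (enl A ρ) :=
  sSup_mul_le hε measureReal_nonneg fun _ he => he.2 A hA hεA

theorem expL_mul_measureReal_le (hB : MeasurableSet B) (hBε : μ.real (enl B ρ) ≤ ε) :
    expL μ ε ρ * μ.real B ≤ μ.real (enl B ρ) :=
  sSup_mul_le measureReal_nonneg measureReal_nonneg fun _ he => he.2 B hB hBε

variable [IsFiniteMeasure μ]

theorem one_le_expG (hε : 0 < ε) (hεμ : ε ≤ μ.real univ) (hρ : 0 ≤ ρ) : 1 ≤ expG μ ε ρ := by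
  have one_mem : 1 ∈ expGSet μ ε ρ :=
    ⟨le_rfl, fun A _ hεA => by
      rw [one_mul]
      exact hεA.trans (measureReal_mono (subset_enl A hρ))⟩
  have bddAbove : BddAbove (expGSet μ ε ρ) :=
    ⟨μ.real univ / ε, fun e he => (le_div_iff₀ hε).2 <|
      (he.2 univ MeasurableSet.univ hεμ).trans (measureReal_mono (subset_univ _))⟩
  exact le_csSup bddAbove one_mem

theorem one_le_expL (hfin : BddAbove (expLSet μ ε ρ)) (hρ : 0 ≤ ρ) : 1 ≤ expL μ ε ρ :=
  le_csSup hfin ⟨le_rfl, fun B _ _ => by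
    rw [one_mul]
    exact measureReal_mono (subset_enl B hρ)⟩

end ExpansionCoefficients

section Decay

variable {X : Type*} [MetricSpace X] [MeasurableSpace X]

theorem antitone_measureReal_compl_enl (μ : Measure X) [IsFiniteMeasure μ] (A : Set X) :
    Antitone fun s => μ.real (enl A s)ᶜ :=
  fun _ _ hst => measureReal_mono (compl_subset_compl.2 (monotone_enl A hst))

variable [OpensMeasurableSpace X]

theorem tendsto_measureReal_compl_enl (μ : Measure X) [IsFiniteMeasure μ] (A : Set X) (s : ℝ) :
    Tendsto (fun u => μ.real (enl A u)ᶜ) (𝓝[>] s) (𝓝 (μ.real (enl A s)ᶜ)) := by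
  have tendsto_enl : Tendsto (μ ∘ enl A) (𝓝[>] s) (𝓝 (μ (enl A s))) := by
    rw [← biInter_gt_enl A s]
    exact tendsto_measure_biInter_gt (fun u _ => (isClosed_enl A u).nullMeasurableSet)
      (fun _ _ _ huv => monotone_enl A huv) ⟨s + 1, lt_add_one s, measure_ne_top μ _⟩
  simp only [measureReal_compl (isClosed_enl A _).measurableSet]
  exact tendsto_const_nhds.sub ((ENNReal.tendsto_toReal (measure_ne_top μ _)).comp tendsto_enl)

variable {μ : Measure X} [IsFiniteMeasure μ] {A : Set X} {δ ρ r s t : ℝ}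

theorem expL_mul_measureReal_compl_enl_le_of_lt (hδ : μ.real (enl A t)ᶜ ≤ δ) (hts : t + ρ < s) :
    expL μ δ ρ * μ.real (enl A s)ᶜ ≤ μ.real (enl A t)ᶜ := by
  rcases (enl A s)ᶜ.eq_empty_or_nonempty with hempty | hne
  · rw [hempty, measureReal_empty, mul_zero]
    exact measureReal_nonneg
  · have enl_le : μ.real (enl (enl A s)ᶜ ρ) ≤ μ.real (enl A t)ᶜ :=
      measureReal_mono (enl_compl_enl_subset hne hts)
    exact (expL_mul_measureReal_le (isClosed_enl A s).measurableSet.compl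
      (enl_le.trans hδ)).trans enl_le

theorem expL_mul_measureReal_compl_enl_add_le (hδ : μ.real (enl A t)ᶜ ≤ δ) :
    expL μ δ ρ * μ.real (enl A (t + ρ))ᶜ ≤ μ.real (enl A t)ᶜ :=
  le_of_tendsto ((tendsto_measureReal_compl_enl μ A (t + ρ)).const_mul _) <|
    eventually_mem_nhdsWithin.mono fun _ hs => expL_mul_measureReal_compl_enl_le_of_lt hδ hs

theorem expL_pow_mul_measureReal_compl_enl_le (hρ : 0 ≤ ρ) (hE : 0 ≤ expL μ δ ρ)
    (hδ : μ.real (enl A t)ᶜ ≤ δ) (m : ℕ) :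
    expL μ δ ρ ^ m * μ.real (enl A (t + m * ρ))ᶜ ≤ μ.real (enl A t)ᶜ := by
  induction m with
  | zero => simp
  | succ m ih =>
    have hδm : μ.real (enl A (t + m * ρ))ᶜ ≤ δ :=
      (antitone_measureReal_compl_enl μ A (le_add_of_nonneg_right (by positivity))).trans hδ
    calc expL μ δ ρ ^ (m + 1) * μ.real (enl A (t + (m + 1 : ℕ) * ρ))ᶜ
        = expL μ δ ρ ^ m * (expL μ δ ρ * μ.real (enl A (t + m * ρ + ρ))ᶜ) := by
          push_cast
          ring_nf
      _ ≤ expL μ δ ρ ^ m * μ.real (enl A (t + m * ρ))ᶜ := by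
          gcongr
          exact expL_mul_measureReal_compl_enl_add_le hδm
      _ ≤ μ.real (enl A t)ᶜ := ih

theorem measureReal_compl_enl_le_mul_rpow (hρ : 0 < ρ) (hE : 1 ≤ expL μ δ ρ)
    (hδ : μ.real (enl A t)ᶜ ≤ δ) (htr : t ≤ r) :
    μ.real (enl A r)ᶜ ≤ μ.real (enl A t)ᶜ * expL μ δ ρ ^ (1 - (r - t) / ρ) := by
  have hE0 : 0 < expL μ δ ρ := one_pos.trans_le hE
  set m : ℕ := ⌊(r - t) / ρ⌋₊
  have add_mul_le : t + m * ρ ≤ r := by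
    have hm : (m : ℝ) ≤ (r - t) / ρ :=
      Nat.floor_le (div_nonneg (sub_nonneg.2 htr) hρ.le)
    linarith [(le_div_iff₀ hρ).1 hm]
  have neg_le : -(m : ℝ) ≤ 1 - (r - t) / ρ := by
    linarith [Nat.lt_floor_add_one ((r - t) / ρ)]
  calc μ.real (enl A r)ᶜ ≤ μ.real (enl A (t + m * ρ))ᶜ :=
        antitone_measureReal_compl_enl μ A add_mul_le
    _ ≤ μ.real (enl A t)ᶜ / expL μ δ ρ ^ m :=
        (le_div_iff₀' (pow_pos hE0 m)).2 (expL_pow_mul_measureReal_compl_enl_le hρ.le hE0.le hδ m)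
    _ = μ.real (enl A t)ᶜ * expL μ δ ρ ^ (-(m : ℝ)) := by
        rw [rpow_neg hE0.le, rpow_natCast, div_eq_mul_inv]
    _ ≤ μ.real (enl A t)ᶜ * expL μ δ ρ ^ (1 - (r - t) / ρ) := by
        gcongr

end Decay

section Concentration

variable {X : Type*} [MetricSpace X] [MeasurableSpace X] [OpensMeasurableSpace X]
  {μ : Measure X} [IsProbabilityMeasure μ] {A : Set X} {ε ρ r c : ℝ}

theorem concFn_le (hε : ε ≤ 1)
    (h : ∀ A : Set X, MeasurableSet A → ε ≤ μ.real A → μ.real (enl A r)ᶜ ≤ c) :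
    concFn μ ε r ≤ c := by
  refine csSup_le ⟨_, univ, MeasurableSet.univ, by simpa using hε, rfl⟩ ?_
  rintro _ ⟨A, hA, hεA, rfl⟩
  exact (probReal_compl_eq_one_sub (isClosed_enl A r).measurableSet).symm.trans_le (h A hA hεA)

theorem measureReal_compl_enl_le_one_sub (hρ : 0 ≤ ρ) (hεA : ε ≤ μ.real A) :
    μ.real (enl A ρ)ᶜ ≤ 1 - ε := by
  rw [probReal_compl_eq_one_sub (isClosed_enl A ρ).measurableSet]
  exact sub_le_sub_left (hεA.trans (measureReal_mono (subset_enl A hρ))) 1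

theorem measureReal_compl_enl_le_one_sub_expG_mul (hε : 0 ≤ ε) (hA : MeasurableSet A)
    (hεA : ε ≤ μ.real A) : μ.real (enl A ρ)ᶜ ≤ 1 - expG μ ε ρ * ε := by
  rw [probReal_compl_eq_one_sub (isClosed_enl A ρ).measurableSet]
  exact sub_le_sub_left (expG_mul_le_measureReal_enl hε hA hεA) 1

theorem concFn_le_one_sub_expG_mul (hε0 : 0 ≤ ε) (hε1 : ε ≤ 1) (hρ : 0 < ρ) (hr : ρ ≤ r)
    (hE : 1 ≤ expL μ (1 - ε) ρ) :
    concFn μ ε r ≤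
      (1 - expG μ ε ρ * ε) * expL μ (1 - ε) ρ ^ 2 * expL μ (1 - ε) ρ ^ (-(r / ρ)) := by
  have hE0 : 0 < expL μ (1 - ε) ρ := one_pos.trans_le hE
  have exponent_eq : 1 - (r - ρ) / ρ = 2 + -(r / ρ) := by
    rw [sub_div, div_self hρ.ne']
    ring
  refine concFn_le hε1 fun A hA hεA => ?_
  calc μ.real (enl A r)ᶜ
      ≤ μ.real (enl A ρ)ᶜ * expL μ (1 - ε) ρ ^ (1 - (r - ρ) / ρ) :=
        measureReal_compl_enl_le_mul_rpow hρ hE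
          (measureReal_compl_enl_le_one_sub hρ.le hεA) hr
    _ ≤ (1 - expG μ ε ρ * ε) * expL μ (1 - ε) ρ ^ (1 - (r - ρ) / ρ) := by
        gcongr
        exact measureReal_compl_enl_le_one_sub_expG_mul hε0 hA hεA
    _ = (1 - expG μ ε ρ * ε) * expL μ (1 - ε) ρ ^ 2 * expL μ (1 - ε) ρ ^ (-(r / ρ)) := by
        rw [exponent_eq, rpow_add hE0, rpow_two, mul_assoc]

end Concentration

theorem stmt12 {X : Type*} [MetricSpace X] [MeasurableSpace X] [BorelSpace X]
    (μ : Measure X) [IsProbabilityMeasure μ] (ε ρ r : ℝ)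
    (hε0 : 0 < ε) (hε1 : ε < 1) (hρ : 0 < ρ) (hr : ρ ≤ r)
    (hfin : BddAbove (expLSet μ (1 - ε) ρ)) :
    concFn μ ε r ≤ (1 - ε) * expG μ ε ρ * (expL μ (1 - ε) ρ) ^ 2 *
        (expL μ (1 - ε) ρ) ^ (-(r / ρ)) ∧
      concFn μ ε r ≤ (1 - expG μ ε ρ * ε) * (expL μ (1 - ε) ρ) ^ 2 *
        (expL μ (1 - ε) ρ) ^ (-(r / ρ)) := by
  have one_le_E : 1 ≤ expL μ (1 - ε) ρ := one_le_expL hfin hρ.le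
  have one_le_G : 1 ≤ expG μ ε ρ := one_le_expG hε0 (by simpa using hε1.le) hρ.le
  have sharp_bound := concFn_le_one_sub_expG_mul hε0.le hε1.le hρ hr one_le_E
  have sharp_le : 1 - expG μ ε ρ * ε ≤ (1 - ε) * expG μ ε ρ := by linarith
  refine ⟨sharp_bound.trans ?_, sharp_bound⟩
  gcongr
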